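/- For every μ ∈ ℝ³, the maps R_1, R_2, R_3 on ℝ³ realize the defining relations of the affine Weyl group of B_2^(1): each R_i is an involution (R_i ∘ R_i = id); R_1 ∘ R_2 = R_2 ∘ R_1, so that R_1 ∘ R_2 has order 2; (R_1 ∘ R_3)² = (R_3 ∘ R_1)², (R_1 ∘ R_3)⁴ = id and (R_1 ∘ R_3)² ≠ id, so that R_1 ∘ R_3 has order 4; and likewise (R_2 ∘ R_3)² = (R_3 ∘ R_2)², (R_2 ∘ R_3)⁴ = id and (R_2 ∘ R_3)² ≠ id. -/

import Mathlib

/-- The (normalized) Cartan matrix of the affine Lie algebra `B₂⁽¹⁾`. -/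
noncomputable def cartanB2 : Matrix (Fin 3) (Fin 3) ℝ :=
  !![1, 0, -1; 0, 1, -1; -1/2, -1/2, 1]

/-- The generator `R_i` (for the parameter `μ`) acting on `ℝ³`. -/
noncomputable def R (μ : Fin 3 → ℝ) (i : Fin 3) (σ : Fin 3 → ℝ) : Fin 3 → ℝ :=
  Function.update σ i (σ i + 4 * μ i - 2 * ∑ j, cartanB2 i j * σ j)

/-!
Each `R_i` is an affine reflection `v ↦ v - φ_i v • e_i`, where `e_i` is the `i`-th basis vector and
`φ_i` is the affine function `v ↦ 2 ∑ j, a_ij v_j - 4 μ_i`, whose linear part takes the value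
`2 a_ij` at `e_j`. For two affine reflections `v ↦ v - φ v • x` and `v ↦ v - ψ v • y`, the order of
the product is governed by the off-diagonal pairings `p = φ.linear y` and `q = ψ.linear x`: if
`p = q = 0` the reflections commute, while if `p * q = 2` the square of their product is given by a
formula symmetric in the two reflections, so it equals its own inverse. In the first case the
product, and in the second case its square, turns `φ` into `-φ`, so it is not the identity.
-/

section Involutive

variable {α : Type*} {f g : α → α}

theorem comp_comp_self_eq_id_of_commute (hf : f.Involutive) (hg : g.Involutive)
    (h : Function.Commute f g) : (f ∘ g) ∘ (f ∘ g) = id := by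
  funext a
  calc f (g (f (g a))) = f (f (g (g a))) := by rw [h (g a)]
    _ = a := by rw [hf, hg]

theorem comp_comp_self_comp_self_eq_id (hf : f.Involutive) (hg : g.Involutive)
    (h : (f ∘ g) ∘ (f ∘ g) = (g ∘ f) ∘ (g ∘ f)) :
    ((f ∘ g) ∘ (f ∘ g)) ∘ ((f ∘ g) ∘ (f ∘ g)) = id := by
  calc ((f ∘ g) ∘ (f ∘ g)) ∘ ((f ∘ g) ∘ (f ∘ g))
      = ((f ∘ g) ∘ (f ∘ g)) ∘ ((g ∘ f) ∘ (g ∘ f)) := congrArg (((f ∘ g) ∘ (f ∘ g)) ∘ ·) h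
    _ = id := by
      funext a
      simp only [Function.comp_apply, hf _, hg _, id]

end Involutive

section AffineReflection

variable {K M : Type*} [CommRing K] [AddCommGroup M] [Module K M]

/-- The affine reflection of a module in the hyperplane `φ = 0` along the vector `x`, the affine
analogue of `Module.preReflection`. It is a reflection in the proper sense only when
`φ.linear x = 2`, which the definition does not require. -/
def affineReflection (x : M) (φ : M →ᵃ[K] K) (v : M) : M :=
  v - φ v • x

variable {x y : M} {φ ψ : M →ᵃ[K] K}

theorem map_affineReflection (φ : M →ᵃ[K] K) (y : M) (ψ : M →ᵃ[K] K) (v : M) :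
    φ (affineReflection y ψ v) = φ v - ψ v * φ.linear y := by
  have h := φ.linearMap_vsub (affineReflection y ψ v) v
  simp only [affineReflection, vsub_eq_sub, sub_sub_cancel_left, map_neg, map_smul,
    smul_eq_mul] at h
  rw [affineReflection]
  linear_combination -h

theorem map_affineReflection_self (hx : φ.linear x = 2) (v : M) :
    φ (affineReflection x φ v) = -φ v := by
  rw [map_affineReflection, hx]
  ring

theorem affineReflection_involutive (hx : φ.linear x = 2) :
    (affineReflection x φ).Involutive := fun v => by
  rw [affineReflection, map_affineReflection_self hx, affineReflection]
  module

theorem affineReflection_comp_apply (v : M) :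
    (affineReflection x φ ∘ affineReflection y ψ) v =
      v - (φ v - φ.linear y * ψ v) • x - ψ v • y := by
  rw [Function.comp_apply, affineReflection, map_affineReflection, affineReflection]
  module

theorem map_affineReflection_comp_left (hx : φ.linear x = 2) (v : M) :
    φ ((affineReflection x φ ∘ affineReflection y ψ) v) = φ.linear y * ψ v - φ v := by
  rw [Function.comp_apply, map_affineReflection_self hx, map_affineReflection]
  ring

theorem map_affineReflection_comp_right (hy : ψ.linear y = 2)
    (hxy : φ.linear y * ψ.linear x = 2) (v : M) :
    ψ ((affineReflection x φ ∘ affineReflection y ψ) v) = ψ v - ψ.linear x * φ v := by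
  rw [Function.comp_apply, map_affineReflection, map_affineReflection_self hy,
    map_affineReflection]
  linear_combination ψ v * hxy

theorem affineReflection_commute (hφy : φ.linear y = 0) (hψx : ψ.linear x = 0) :
    Function.Commute (affineReflection x φ) (affineReflection y ψ) := fun v =>
  calc affineReflection x φ (affineReflection y ψ v)
      = v - φ v • x - ψ v • y :=
        (affineReflection_comp_apply v).trans (by rw [hφy, zero_mul, sub_zero])
    _ = v - ψ v • y - φ v • x := sub_right_comm _ _ _
    _ = affineReflection y ψ (affineReflection x φ v) :=
        .symm <| (affineReflection_comp_apply v).trans (by rw [hψx, zero_mul, sub_zero])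

theorem affineReflection_comp_comp_self_apply (hx : φ.linear x = 2) (hy : ψ.linear y = 2)
    (hxy : φ.linear y * ψ.linear x = 2) (v : M) :
    ((affineReflection x φ ∘ affineReflection y ψ) ∘
        (affineReflection x φ ∘ affineReflection y ψ)) v =
      v - (2 * φ v - φ.linear y * ψ v) • x - (2 * ψ v - ψ.linear x * φ v) • y := by
  rw [Function.comp_apply (f := affineReflection x φ ∘ affineReflection y ψ),
    affineReflection_comp_apply, map_affineReflection_comp_left hx,
    map_affineReflection_comp_right hy hxy, affineReflection_comp_apply]
  have coeff_x : φ.linear y * ψ v - φ v - φ.linear y * (ψ v - ψ.linear x * φ v) = φ v := by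
    linear_combination φ v * hxy
  rw [coeff_x]
  module

theorem affineReflection_comp_comp_self_comm (hx : φ.linear x = 2) (hy : ψ.linear y = 2)
    (hxy : φ.linear y * ψ.linear x = 2) :
    (affineReflection x φ ∘ affineReflection y ψ) ∘
        (affineReflection x φ ∘ affineReflection y ψ) =
      (affineReflection y ψ ∘ affineReflection x φ) ∘
        (affineReflection y ψ ∘ affineReflection x φ) := by
  funext v
  rw [affineReflection_comp_comp_self_apply hx hy hxy,
    affineReflection_comp_comp_self_apply hy hx ((mul_comm _ _).trans hxy)]
  exact sub_right_comm _ _ _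

theorem ne_id_of_map_eq_neg (h4 : (4 : K) ≠ 0) (hx : φ.linear x = 2) {f : M → M}
    (hf : ∀ v, φ (f v) = -φ v) : f ≠ id := by
  rintro rfl
  have hφ : φ.linear x = φ x - φ 0 := by
    simpa using φ.linearMap_vsub x 0
  have hf₀ : φ 0 = -φ 0 := hf 0
  have hfx : φ x = -φ x := hf x
  exact h4 (by linear_combination hfx - hf₀ - 2 * hx + 2 * hφ)

theorem affineReflection_comp_ne_id (h4 : (4 : K) ≠ 0) (hx : φ.linear x = 2)
    (hφy : φ.linear y = 0) : affineReflection x φ ∘ affineReflection y ψ ≠ id :=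
  ne_id_of_map_eq_neg h4 hx fun v => by
    rw [Function.comp_apply, map_affineReflection_self hx, map_affineReflection, hφy, mul_zero,
      sub_zero]

theorem affineReflection_comp_comp_self_ne_id (h4 : (4 : K) ≠ 0) (hx : φ.linear x = 2)
    (hy : ψ.linear y = 2) (hxy : φ.linear y * ψ.linear x = 2) :
    (affineReflection x φ ∘ affineReflection y ψ) ∘
      (affineReflection x φ ∘ affineReflection y ψ) ≠ id :=
  ne_id_of_map_eq_neg h4 hx fun v => by
    rw [Function.comp_apply, map_affineReflection_comp_left hx,
      map_affineReflection_comp_left hx, map_affineReflection_comp_right hy hxy]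
    linear_combination -φ v * hxy

end AffineReflection

/-- The affine function on `ℝ³` whose zero locus is the reflecting hyperplane of `R μ i`, with the
sign and scale chosen so that `R μ i σ = σ - rootFunction μ i σ • Pi.single i 1`. -/
noncomputable def rootFunction (μ : Fin 3 → ℝ) (i : Fin 3) : (Fin 3 → ℝ) →ᵃ[ℝ] ℝ :=
  (2 • (LinearMap.proj i ∘ₗ cartanB2.mulVecLin)).toAffineMap - AffineMap.const ℝ _ (4 * μ i)

theorem rootFunction_apply (μ : Fin 3 → ℝ) (i : Fin 3) (σ : Fin 3 → ℝ) :
    rootFunction μ i σ = 2 * ∑ j, cartanB2 i j * σ j - 4 * μ i := by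
  simp [rootFunction, Matrix.mulVec, dotProduct]

theorem rootFunction_linear_single (μ : Fin 3 → ℝ) (i j : Fin 3) :
    (rootFunction μ i).linear (Pi.single j 1) = 2 * cartanB2 i j := by
  simp [rootFunction]

theorem R_eq_affineReflection (μ : Fin 3 → ℝ) (i : Fin 3) :
    R μ i = affineReflection (Pi.single i 1) (rootFunction μ i) := by
  funext σ k
  obtain rfl | hk := eq_or_ne k i
  · simp only [R, affineReflection, rootFunction_apply, Function.update_self, Pi.sub_apply,
      Pi.smul_apply, Pi.single_eq_same, smul_eq_mul]
    ring
  · simp [R, affineReflection, hk]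

theorem rootFunction_linear_single_self (μ : Fin 3 → ℝ) (i : Fin 3) :
    (rootFunction μ i).linear (Pi.single i 1) = 2 := by
  rw [rootFunction_linear_single]
  fin_cases i <;> simp [cartanB2]

theorem rootFunction_zero_linear_single_one (μ : Fin 3 → ℝ) :
    (rootFunction μ 0).linear (Pi.single 1 1) = 0 := by
  simp [rootFunction_linear_single, cartanB2]

theorem rootFunction_one_linear_single_zero (μ : Fin 3 → ℝ) :
    (rootFunction μ 1).linear (Pi.single 0 1) = 0 := by
  simp [rootFunction_linear_single, cartanB2]

theorem rootFunction_linear_single_mul_eq_two (μ : Fin 3 → ℝ) {i : Fin 3} (hi : i ≠ 2) :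
    (rootFunction μ i).linear (Pi.single 2 1) * (rootFunction μ 2).linear (Pi.single i 1) = 2 := by
  have entries : cartanB2 i 2 = -1 ∧ cartanB2 2 i = -1 / 2 := by
    fin_cases i
    · exact ⟨rfl, rfl⟩
    · exact ⟨rfl, rfl⟩
    · exact absurd rfl hi
  rw [rootFunction_linear_single, rootFunction_linear_single, entries.1, entries.2]
  norm_num

theorem R_involutive (μ : Fin 3 → ℝ) (i : Fin 3) : (R μ i).Involutive := by
  rw [R_eq_affineReflection]
  exact affineReflection_involutive (rootFunction_linear_single_self μ i)

theorem R_zero_commute_R_one (μ : Fin 3 → ℝ) : Function.Commute (R μ 0) (R μ 1) := by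
  simp only [R_eq_affineReflection]
  exact affineReflection_commute (rootFunction_zero_linear_single_one μ)
    (rootFunction_one_linear_single_zero μ)

theorem R_zero_comp_R_one_ne_id (μ : Fin 3 → ℝ) : R μ 0 ∘ R μ 1 ≠ id := by
  simp only [R_eq_affineReflection]
  exact affineReflection_comp_ne_id four_ne_zero (rootFunction_linear_single_self μ 0)
    (rootFunction_zero_linear_single_one μ)

theorem R_comp_R_two_comp_self_comm (μ : Fin 3 → ℝ) {i : Fin 3} (hi : i ≠ 2) :
    (R μ i ∘ R μ 2) ∘ (R μ i ∘ R μ 2) = (R μ 2 ∘ R μ i) ∘ (R μ 2 ∘ R μ i) := by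
  simp only [R_eq_affineReflection]
  exact affineReflection_comp_comp_self_comm (rootFunction_linear_single_self μ i)
    (rootFunction_linear_single_self μ 2) (rootFunction_linear_single_mul_eq_two μ hi)

theorem R_comp_R_two_comp_self_ne_id (μ : Fin 3 → ℝ) {i : Fin 3} (hi : i ≠ 2) :
    (R μ i ∘ R μ 2) ∘ (R μ i ∘ R μ 2) ≠ id := by
  simp only [R_eq_affineReflection]
  exact affineReflection_comp_comp_self_ne_id four_ne_zero (rootFunction_linear_single_self μ i)
    (rootFunction_linear_single_self μ 2) (rootFunction_linear_single_mul_eq_two μ hi)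

/-- The maps `R₁, R₂, R₃` realize the defining relations of the affine Weyl group of
`B₂⁽¹⁾`: each `R_i` is an involution; `R₁ ∘ R₂ = R₂ ∘ R₁` and `R₁ ∘ R₂` has order 2;
`(R₁ ∘ R₃)² = (R₃ ∘ R₁)²` and `R₁ ∘ R₃` has order 4; likewise for `R₂, R₃`. -/
theorem affine_weyl_relations (μ : Fin 3 → ℝ) :
    (∀ i : Fin 3, R μ i ∘ R μ i = id) ∧
    (R μ 0 ∘ R μ 1 = R μ 1 ∘ R μ 0) ∧
    ((R μ 0 ∘ R μ 1) ∘ (R μ 0 ∘ R μ 1) = id ∧ R μ 0 ∘ R μ 1 ≠ id) ∧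
    ((R μ 0 ∘ R μ 2) ∘ (R μ 0 ∘ R μ 2) = (R μ 2 ∘ R μ 0) ∘ (R μ 2 ∘ R μ 0) ∧
      ((R μ 0 ∘ R μ 2) ∘ (R μ 0 ∘ R μ 2)) ∘ ((R μ 0 ∘ R μ 2) ∘ (R μ 0 ∘ R μ 2)) = id ∧
      (R μ 0 ∘ R μ 2) ∘ (R μ 0 ∘ R μ 2) ≠ id) ∧
    ((R μ 1 ∘ R μ 2) ∘ (R μ 1 ∘ R μ 2) = (R μ 2 ∘ R μ 1) ∘ (R μ 2 ∘ R μ 1) ∧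
      ((R μ 1 ∘ R μ 2) ∘ (R μ 1 ∘ R μ 2)) ∘ ((R μ 1 ∘ R μ 2) ∘ (R μ 1 ∘ R μ 2)) = id ∧
      (R μ 1 ∘ R μ 2) ∘ (R μ 1 ∘ R μ 2) ≠ id) := by
  have comm := R_zero_commute_R_one μ
  have hinv := R_involutive μ
  have braid₀₂ := R_comp_R_two_comp_self_comm μ (i := 0) (by decide)
  have braid₁₂ := R_comp_R_two_comp_self_comm μ (i := 1) (by decide)
  exact ⟨fun i => (hinv i).comp_self, comm.comp_eq,
    ⟨comp_comp_self_eq_id_of_commute (hinv 0) (hinv 1) comm, R_zero_comp_R_one_ne_id μ⟩,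
    ⟨braid₀₂, comp_comp_self_comp_self_eq_id (hinv 0) (hinv 2) braid₀₂,
      R_comp_R_two_comp_self_ne_id μ (by decide)⟩,
    ⟨braid₁₂, comp_comp_self_comp_self_eq_id (hinv 1) (hinv 2) braid₁₂,
      R_comp_R_two_comp_self_ne_id μ (by decide)⟩⟩
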